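/- (Corollary 1, observability for the linear model.) Let H be a real M × n matrix such that every collection of n rows of H is linearly independent (n ≤ M). Then every nonzero outlier vector a ∈ ℝ^M with ‖a‖₀ ≤ M − n is observable for the linear measurement model: for every x_o ∈ ℝ^n there is no x ∈ ℝ^n with Hx = Hx_o + a. -/

import Mathlib

/-- The ℓ0-pseudonorm: number of nonzero entries of a vector in ℝ^M. -/
noncomputable def l0 {M : ℕ} (a : Fin M → ℝ) : ℕ :=
  (Finset.univ.filter fun i => a i ≠ 0).card

theorem l0_eq_hammingNorm {M : ℕ} (a : Fin M → ℝ) : l0 a = hammingNorm a := rfl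

theorem card_filter_eq_add_hammingDist {ι α : Type*} [Fintype ι] [DecidableEq α] (f g : ι → α) :
    (Finset.univ.filter fun i => f i = g i).card + hammingDist f g = Fintype.card ι :=
  Finset.card_filter_add_card_filter_not fun i => f i = g i

theorem mulVec_injective_of_span_rows_eq_top {R m n : Type*} [Semiring R] [Fintype n]
    {A : Matrix m n R} (hA : Submodule.span R (Set.range A.row) = ⊤) :
    Function.Injective A.mulVec := by
  classical
  intro x y hxy
  -- `Fintype.linearCombination R x` unfolds to the left-linear functional `v ↦ v ⬝ᵥ x`.
  have hfunctionals : Fintype.linearCombination R x = Fintype.linearCombination R y :=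
    LinearMap.ext_on_range hA fun i => congrFun hxy i
  funext j
  simpa using LinearMap.congr_fun hfunctionals (Pi.single j 1)

section DivisionRing

variable {K m n : Type*} [DivisionRing K] [Fintype n]

theorem mulVec_injective_of_linearIndependent_rows [Fintype m] {A : Matrix m n K}
    (hA : LinearIndependent K A.row) (hcard : Fintype.card m = Fintype.card n) :
    Function.Injective A.mulVec :=
  mulVec_injective_of_span_rows_eq_top (hA.span_eq_top_of_card_eq_finrank' (by simpa using hcard))

variable [Fintype m] [DecidableEq K]

/-- When `card n ≤ card m`, this says that the range of `H` is an MDS code: its minimum distance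
attains the Singleton bound. -/
theorem card_lt_hammingDist_mulVec_add_card {H : Matrix m n K}
    (hrows : ∀ s : Finset m, s.card = Fintype.card n → LinearIndependent K fun i : s => H i)
    {x y : n → K} (hxy : x ≠ y) :
    Fintype.card m < hammingDist (H.mulVec x) (H.mulVec y) + Fintype.card n := by
  by_contra! hdist
  have hagree : Fintype.card n ≤
      (Finset.univ.filter fun i => H.mulVec x i = H.mulVec y i).card := by
    have := card_filter_eq_add_hammingDist (H.mulVec x) (H.mulVec y)
    omega
  obtain ⟨s, hs, hscard⟩ := Finset.exists_subset_card_eq hagree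
  let Hs : Matrix s n K := H.submatrix (↑) id
  have hinj : Function.Injective Hs.mulVec :=
    mulVec_injective_of_linearIndependent_rows (hrows s hscard) (by simpa using hscard)
  exact hxy (hinj (funext fun i => (Finset.mem_filter.mp (hs i.2)).2))

theorem linear_observability_general {H : Matrix m n K}
    (hrows : ∀ s : Finset m, s.card = Fintype.card n → LinearIndependent K fun i : s => H i)
    {a : m → K} (ha : a ≠ 0) (hcard : hammingNorm a + Fintype.card n ≤ Fintype.card m)
    (x₀ : n → K) : ¬ ∃ x : n → K, H.mulVec x = H.mulVec x₀ + a := by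
  rintro ⟨x, hx⟩
  have hne : x₀ ≠ x := by
    rintro rfl
    exact ha (left_eq_add.mp hx)
  have hdist : hammingDist (H.mulVec x₀) (H.mulVec x) = hammingNorm a := by
    rw [hammingDist_eq_hammingNorm, hx, neg_add_cancel_left]
  exact (card_lt_hammingDist_mulVec_add_card hrows hne).not_ge (hdist ▸ hcard)

end DivisionRing

/-- Corollary 1 (observability for the linear model): if every collection of `n` rows
of `H` is linearly independent (`n ≤ M`), every nonzero outlier `a` with
`‖a‖₀ ≤ M − n` is observable for `z = Hx + a`. -/
theorem linear_observability {M n : ℕ} (hn : 1 ≤ n) (hnM : n ≤ M)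
    (H : Matrix (Fin M) (Fin n) ℝ)
    (hrows : ∀ s : Finset (Fin M), s.card = n →
      LinearIndependent ℝ (fun i : s => H i)) :
    ∀ a : Fin M → ℝ, a ≠ 0 → l0 a ≤ M - n →
      ∀ x₀ : Fin n → ℝ, ¬ ∃ x : Fin n → ℝ, H.mulVec x = H.mulVec x₀ + a := by
  intro a ha hl
  rw [l0_eq_hammingNorm, Nat.le_sub_iff_add_le hnM] at hl
  exact linear_observability_general (by simpa using hrows) ha (by simpa using hl)
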